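/- Work in the max-plus semiring $\mathbb{R}_{\max}=\mathbb{R}\cup\{-\infty\}$ (addition is $\max$, multiplication is $+$), so that $(A\otimes B)_{ij}=\max_k(A_{ik}+B_{kj})$ and $(A\otimes v)_i=\max_j(A_{ij}+v_j)$; $0$ also denotes the zero vector. For a matrix $A$ over $\mathbb{R}_{\max}$ let $\widehat A$ be the matrix with $\widehat A_{ij}=-\infty$ if $A_{ij}=-\infty$ and $\widehat A_{ij}=0$ otherwise. Let $(A(n))_{n\ge 1}$ be a stationary and ergodic sequence of random $d\times d$ matrices with entries in $\mathbb{R}_{\max}$, almost surely having at least one finite entry on each row. Let $(I,J)$ be a partition of $\{1,\dots,d\}$ such that $A_{ij}(n)=-\infty$ almost surely for all $n\ge 1$, $i\in J$, $j\in I$, and write $B(n):=(A_{ij}(n))_{i,j\in I}$ and $D(n):=(A_{ij}(n))_{i\in I,\,j\in J}$. Assume that the directed graph $\mathcal{G}(B)$ with node set $I$ and an arc $(i,j)$ whenever $\mathbb{P}(B_{ij}(1)\neq-\infty)>0$ is strongly connected. Assume moreover that the set $$\mathcal{E}:=\{M\in\{0,-\infty\}^{d\times d} : \exists n\ge 1,\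 \mathbb{P}(\widehat A(1)\otimes\cdots\otimes\widehat A(n)=M)>0\}$$ is a semigroup under max-plus matrix multiplication, and that $\mathbb{P}(D(1)=(-\infty)^{I\times J})<1$. Then $\mathbb{P}(\mathcal{A}_i)=0$ for every $i\in I$, where $$\mathcal{A}_i:=\{\forall n\ge 0,\ (B(1)\otimes\cdots\otimes B(n)\otimes D(n+1)\otimes 0)_i=-\infty\}$$ and the condition for $n=0$ reads $(D(1)\otimes 0)_i=-\infty$. -/

import Mathlib

open MeasureTheory

noncomputable section

/-- Max-plus product of matrices: `(M ⊗ N) i j = max_k (M i k + N k j)`. The semiring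
`ℝ ∪ {-∞}` is encoded in `EReal` with `-∞ = ⊥`; the value `⊤` is excluded by hypothesis. -/
def mpMul {α β γ : Type*} (M : α → β → EReal) (N : β → γ → EReal) : α → γ → EReal :=
  fun i j => ⨆ k, M i k + N k j

/-- Max-plus action of a matrix on a vector: `(M ⊗ v) i = max_j (M i j + v j)`. -/
def mpVec {α β : Type*} (M : α → β → EReal) (v : β → EReal) : α → EReal :=
  fun i => ⨆ j, M i j + v j

open Classical in
/-- The max-plus identity matrix: `0` on the diagonal, `-∞` elsewhere. -/
def mpId {α : Type*} : α → α → EReal :=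
  fun i j => if i = j then 0 else ⊥

/-- `mpProd f n = f 0 ⊗ f 1 ⊗ ⋯ ⊗ f (n-1)`; the empty product is the identity. -/
def mpProd {α : Type*} (f : ℕ → α → α → EReal) : ℕ → α → α → EReal
  | 0 => mpId
  | n + 1 => mpMul (mpProd f n) (f n)

open Classical in
/-- The pattern matrix: `-∞` where `M i j = -∞`, and `0` elsewhere. -/
def mpPattern {α β : Type*} (M : α → β → EReal) : α → β → EReal :=
  fun i j => if M i j = ⊥ then ⊥ else 0

/-- The submatrix of `M` with rows in `S` and columns in `T`. -/
def mpBlock {α β : Type*} (S : Set α) (T : Set β) (M : α → β → EReal) : S → T → EReal :=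
  fun i j => M i j

/-- The (one-sided) sequence `X` of random variables is stationary and ergodic: the left shift
preserves its law on the sequence space, and is ergodic for it. -/
def IsStationaryErgodic {Ω E : Type*} [MeasurableSpace Ω] [MeasurableSpace E]
    (μ : Measure Ω) (X : ℕ → Ω → E) : Prop :=
  Ergodic (fun (x : ℕ → E) (n : ℕ) => x (n + 1)) (μ.map fun ω n => X n ω)

/-- `(i, j)` is an arc of the graph of the random matrix `B`:
the entry `B i j` is different from `-∞` with positive probability. -/
def IsArc {Ω α : Type*} [MeasurableSpace Ω] (μ : Measure Ω) (B : Ω → α → α → EReal)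
    (i j : α) : Prop :=
  0 < μ {ω | B ω i j ≠ ⊥}

/-- A directed graph is strongly connected: there is a path from every node to every node
(a path may be empty, so that a one-node graph is strongly connected). -/
def IsStronglyConnected {α : Type*} (r : α → α → Prop) : Prop :=
  ∀ i j, Relation.ReflTransGen r i j

/-- The set of the matrices that are, for some `n ≥ 1` and with positive probability, equal to
the product of the patterns of the first `n` matrices of the sequence `A`. -/
def patternSet {Ω α : Type*} [MeasurableSpace Ω] (μ : Measure Ω) (A : ℕ → Ω → α → α → EReal) :
    Set (α → α → EReal) :=
  {M | ∃ n : ℕ, 1 ≤ n ∧ 0 < μ {ω | mpProd (fun k => mpPattern (A k ω)) n = M}}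

end

theorem mpMul_ne_bot_iff {α β γ : Type*} {M : α → β → EReal} {N : β → γ → EReal} {i : α} {j : γ} :
    mpMul M N i j ≠ ⊥ ↔ ∃ k, M i k ≠ ⊥ ∧ N k j ≠ ⊥ := by
  simp [mpMul, EReal.add_eq_bot_iff]

theorem mpVec_zero_eq_bot_iff {α β : Type*} {M : α → β → EReal} {i : α} :
    mpVec M (fun _ => 0) i = ⊥ ↔ ∀ j, M i j = ⊥ := by
  simp [mpVec]

theorem mpPattern_ne_bot_iff {α β : Type*} {M : α → β → EReal} {i : α} {j : β} :
    mpPattern M i j ≠ ⊥ ↔ M i j ≠ ⊥ := by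
  by_cases h : M i j = ⊥ <;> simp [mpPattern, h]

theorem mpId_ne_bot_iff {α : Type*} {i j : α} : (mpId : α → α → EReal) i j ≠ ⊥ ↔ i = j := by
  by_cases h : i = j <;> simp [mpId, h]

theorem mpProd_one_ne_bot_iff {α : Type*} {f : ℕ → α → α → EReal} {i j : α} :
    mpProd f 1 i j ≠ ⊥ ↔ f 0 i j ≠ ⊥ := by
  simp only [mpProd, mpMul_ne_bot_iff, mpId_ne_bot_iff]
  simp

theorem mpProd_mpPattern_ne_bot_iff {α : Type*} {f : ℕ → α → α → EReal} {n : ℕ} {i j : α} :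
    mpProd (fun k => mpPattern (f k)) n i j ≠ ⊥ ↔ mpProd f n i j ≠ ⊥ := by
  induction n generalizing j with
  | zero => rfl
  | succ n ih => simp only [mpProd, mpMul_ne_bot_iff, ih, mpPattern_ne_bot_iff]

theorem mpProd_add_ne_bot {α : Type*} {f : ℕ → α → α → EReal} {m n : ℕ} {i j k : α}
    (h₁ : mpProd f m i j ≠ ⊥) (h₂ : mpProd (fun l => f (l + m)) n j k ≠ ⊥) :
    mpProd f (n + m) i k ≠ ⊥ := by
  induction n generalizing k with
  | zero =>
    obtain rfl := mpId_ne_bot_iff.1 h₂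
    simpa using h₁
  | succ n ih =>
    obtain ⟨l, hl, hlk⟩ := mpMul_ne_bot_iff.1 h₂
    rw [Nat.succ_add_eq_add_succ, Nat.add_succ]
    exact mpMul_ne_bot_iff.2 ⟨l, ih hl, hlk⟩

/-- A product of matrices with no empty row has no empty row. -/
theorem exists_mpProd_ne_bot {α : Type*} {f : ℕ → α → α → EReal}
    (hf : ∀ n i, ∃ j, f n i j ≠ ⊥) (n : ℕ) (i : α) : ∃ j, mpProd f n i j ≠ ⊥ := by
  induction n with
  | zero => exact ⟨i, mpId_ne_bot_iff.2 rfl⟩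
  | succ n ih =>
    obtain ⟨j, hj⟩ := ih
    obtain ⟨k, hk⟩ := hf n j
    exact ⟨k, mpMul_ne_bot_iff.2 ⟨j, hj, hk⟩⟩

/-- If no arc leads from `J` to its complement, the same holds for products. -/
theorem mem_of_mpProd_ne_bot {α : Type*} {f : ℕ → α → α → EReal} {J : Set α}
    (hf : ∀ n, ∀ i ∈ J, ∀ j, f n i j ≠ ⊥ → j ∈ J) {n : ℕ} {i j : α} (hi : i ∈ J)
    (h : mpProd f n i j ≠ ⊥) : j ∈ J := by
  induction n generalizing j with
  | zero => exact mpId_ne_bot_iff.1 h ▸ hi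
  | succ n ih =>
    obtain ⟨k, hk, hkj⟩ := mpMul_ne_bot_iff.1 h
    exact hf n k (ih hk) j hkj

/-- If the block products never lead from `i` to `J`, every path starting at `i` stays in `I`. -/
theorem mem_of_forall_mpVec_eq_bot {α : Type*} {f : ℕ → α → α → EReal} {I J : Set α}
    (hcover : I ∪ J = Set.univ) {i : I}
    (h : ∀ n, mpVec (mpMul (mpProd (fun k => mpBlock I I (f k)) n) (mpBlock I J (f n)))
      (fun _ => 0) i = ⊥) {n : ℕ} {j : α} (hj : mpProd f n i j ≠ ⊥) :
    ∃ hI : j ∈ I, mpProd (fun k => mpBlock I I (f k)) n i ⟨j, hI⟩ ≠ ⊥ := by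
  induction n generalizing j with
  | zero =>
    obtain rfl := mpId_ne_bot_iff.1 hj
    exact ⟨i.2, mpId_ne_bot_iff.2 rfl⟩
  | succ n ih =>
    obtain ⟨k, hk, hkj⟩ := mpMul_ne_bot_iff.1 hj
    obtain ⟨hkI, hkB⟩ := ih hk
    have hjIJ : j ∈ I ∪ J := hcover ▸ Set.mem_univ j
    rcases hjIJ with hI | hJ
    · exact ⟨hI, mpMul_ne_bot_iff.2 ⟨⟨k, hkI⟩, hkB, hkj⟩⟩
    · exact absurd (mpVec_zero_eq_bot_iff.1 (h n) ⟨j, hJ⟩)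
        (mpMul_ne_bot_iff.2 ⟨⟨k, hkI⟩, hkB, hkj⟩)

/-- In a semigroup `E` of matrices without empty rows, for which `J` is closed and can be reached
from every node, some matrix leads from every node to `J`. -/
theorem exists_forall_exists_mem_ne_bot {α : Type*} [Finite α] {E : Set (α → α → EReal)}
    {J : Set α} (hne : E.Nonempty) (hmul : ∀ M ∈ E, ∀ N ∈ E, mpMul M N ∈ E)
    (hrow : ∀ M ∈ E, ∀ i, ∃ j, M i j ≠ ⊥)
    (hJ : ∀ M ∈ E, ∀ i ∈ J, ∀ j, M i j ≠ ⊥ → j ∈ J)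
    (hreach : ∀ i, ∃ M ∈ E, ∃ j ∈ J, M i j ≠ ⊥) :
    ∃ M ∈ E, ∀ i, ∃ j ∈ J, M i j ≠ ⊥ := by
  suffices ∀ s : Set α, s.Finite → ∃ M ∈ E, ∀ i ∈ s, ∃ j ∈ J, M i j ≠ ⊥ by
    simpa using this Set.univ Set.finite_univ
  intro s hs
  induction s, hs using Set.Finite.induction_on with
  | empty => exact ⟨hne.some, hne.some_mem, by simp⟩
  | @insert a s _ _ ih =>
    obtain ⟨M, hM, hMs⟩ := ih
    obtain ⟨k, hk⟩ := hrow M hM a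
    obtain ⟨N, hN, j, hj, hkj⟩ := hreach k
    refine ⟨mpMul M N, hmul M hM N hN, ?_⟩
    rintro b (rfl | hb)
    · exact ⟨j, hj, mpMul_ne_bot_iff.2 ⟨k, hk, hkj⟩⟩
    · obtain ⟨l, hl, hbl⟩ := hMs b hb
      obtain ⟨m, hm⟩ := hrow N hN l
      exact ⟨m, hJ N hN l hl m hm, mpMul_ne_bot_iff.2 ⟨l, hbl, hm⟩⟩

/-- An entry which is finite with positive probability is finite in some element of the
pattern set. -/
theorem exists_mem_patternSet_ne_bot {Ω α : Type*} [Finite α] [MeasurableSpace Ω] {μ : Measure Ω}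
    {A : ℕ → Ω → α → α → EReal} {i j : α} (h : 0 < μ {ω | A 0 ω i j ≠ ⊥}) :
    ∃ M ∈ patternSet μ A, M i j ≠ ⊥ := by
  have hcov : {ω | A 0 ω i j ≠ ⊥} =
      ⋃ S : Set (α × α), {ω | A 0 ω i j ≠ ⊥ ∧ {p : α × α | A 0 ω p.1 p.2 = ⊥} = S} := by
    ext ω
    simp
  rw [hcov] at h
  obtain ⟨S, hS⟩ := exists_measure_pos_of_not_measure_iUnion_null h.ne'
  obtain ⟨ω₀, h₀, hS₀⟩ := nonempty_of_measure_ne_zero hS.ne'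
  refine ⟨mpProd (fun k => mpPattern (A k ω₀)) 1, ⟨1, le_rfl, hS.trans_le (measure_mono ?_)⟩,
    mpProd_mpPattern_ne_bot_iff.2 (mpProd_one_ne_bot_iff.2 h₀)⟩
  rintro ω ⟨-, hω⟩
  have hpat : mpPattern (A 0 ω) = mpPattern (A 0 ω₀) := by
    funext a b
    have hab : A 0 ω a b = ⊥ ↔ A 0 ω₀ a b = ⊥ := Set.ext_iff.1 (hω.trans hS₀.symm) (a, b)
    simp only [mpPattern, hab]
  simp [mpProd, hpat]

/-- An element of the pattern set has the support of a product along an almost sure event. -/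
theorem exists_of_mem_patternSet {Ω α : Type*} [MeasurableSpace Ω] {μ : Measure Ω}
    {A : ℕ → Ω → α → α → EReal} {M : α → α → EReal} (hM : M ∈ patternSet μ A)
    {p : Ω → Prop} (hp : ∀ᵐ ω ∂μ, p ω) :
    ∃ n ω, p ω ∧ ∀ i j, M i j ≠ ⊥ ↔ mpProd (fun k => A k ω) n i j ≠ ⊥ := by
  obtain ⟨n, -, hn⟩ := hM
  obtain ⟨ω, hω, hpω⟩ := ((frequently_ae_iff.2 hn.ne').and_eventually hp).exists
  exact ⟨n, ω, hpω, fun i j => hω ▸ mpProd_mpPattern_ne_bot_iff⟩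

theorem measurable_mpProd {α : Type*} [Finite α] (n : ℕ) (i j : α) :
    Measurable fun x : ℕ → α → α → EReal => mpProd x n i j := by
  induction n generalizing j with
  | zero => exact measurable_const
  | succ n ih =>
    refine Measurable.iSup fun k => (ih k).add ?_
    fun_prop

/-- A set of positive measure is almost surely visited by an ergodic map. -/
theorem Ergodic.ae_exists_iterate_mem {X : Type*} [MeasurableSpace X] {ν : Measure X}
    [IsFiniteMeasure ν] {T : X → X} (hT : Ergodic T ν) {U : Set X} (hU : MeasurableSet U)
    (hpos : ν U ≠ 0) : ∀ᵐ x ∂ν, ∃ n, T^[n] x ∈ U := by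
  have hV : MeasurableSet (⋃ n, T^[n] ⁻¹' U) :=
    MeasurableSet.iUnion fun n => hT.measurable.iterate n hU
  have hsub : T ⁻¹' (⋃ n, T^[n] ⁻¹' U) ⊆ ⋃ n, T^[n] ⁻¹' U := by
    intro x hx
    obtain ⟨n, hn⟩ := Set.mem_iUnion.1 hx
    exact Set.mem_iUnion.2 ⟨n + 1, hn⟩
  rcases hT.ae_empty_or_univ_of_preimage_ae_le hV.nullMeasurableSet hsub.eventuallyLE with h | h
  · exact absurd (measure_mono_null (Set.subset_iUnion (fun n => T^[n] ⁻¹' U) 0)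
      (ae_eq_empty.1 h)) hpos
  · filter_upwards [Filter.eventuallyEq_univ.1 h] with x hx
    exact Set.mem_iUnion.1 hx

theorem iterate_shift_apply {E : Type*} (x : ℕ → E) (n k : ℕ) :
    (fun (x : ℕ → E) (n : ℕ) => x (n + 1))^[n] x k = x (k + n) := by
  induction n generalizing x with
  | zero => rfl
  | succ n ih => rw [Function.iterate_succ_apply, ih, add_assoc]

/-- The sequence `A(1), A(2), …` is indexed from `0`: `A k` stands for `A(k+1)`. So
`mpProd (fun k => mpBlock I I (A k ω)) n` is `B(1) ⊗ ⋯ ⊗ B(n)`, the identity for `n = 0`,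
and `mpBlock I J (A n ω)` is `D(n+1)`. -/
theorem block_lemma_part_two
    {d : ℕ} {Ω : Type*} [MeasurableSpace Ω] (μ : Measure Ω) [IsProbabilityMeasure μ]
    (A : ℕ → Ω → Fin d → Fin d → EReal) (hA : ∀ n, Measurable (A n))
    (hnotop : ∀ n ω i j, A n ω i j ≠ ⊤)
    (herg : IsStationaryErgodic μ A)
    (hrow : ∀ n, ∀ᵐ ω ∂μ, ∀ i, ∃ j, A n ω i j ≠ ⊥)
    (I J : Set (Fin d)) (hdisj : Disjoint I J) (hcover : I ∪ J = Set.univ)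
    (hblock : ∀ n, ∀ᵐ ω ∂μ, ∀ i ∈ J, ∀ j ∈ I, A n ω i j = ⊥)
    (hconn : IsStronglyConnected (IsArc μ fun ω => mpBlock I I (A 0 ω)))
    (hsemi : ∀ M ∈ patternSet μ A, ∀ N ∈ patternSet μ A, mpMul M N ∈ patternSet μ A)
    (hD : μ {ω | mpBlock I J (A 0 ω) = fun _ _ => ⊥} < 1)
    (i : I) :
    μ {ω | ∀ n : ℕ,
      mpVec (mpMul (mpProd (fun k => mpBlock I I (A k ω)) n) (mpBlock I J (A n ω)))
        (fun _ => 0) i = ⊥} = 0 := by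
  have hgood : ∀ᵐ ω ∂μ, (∀ n a, ∃ b, A n ω a b ≠ ⊥) ∧
      ∀ n, ∀ a ∈ J, ∀ b, A n ω a b ≠ ⊥ → b ∈ J := by
    filter_upwards [ae_all_iff.2 hrow, ae_all_iff.2 hblock] with ω h₁ h₂
    refine ⟨h₁, fun n a ha b hb => ?_⟩
    have hbIJ : b ∈ I ∪ J := hcover ▸ Set.mem_univ b
    exact hbIJ.resolve_left fun hbI => hb (h₂ n a ha b hbI)
  have hErow : ∀ M ∈ patternSet μ A, ∀ a, ∃ b, M a b ≠ ⊥ := by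
    intro M hM a
    obtain ⟨n, ω, ⟨hω, -⟩, hiff⟩ := exists_of_mem_patternSet hM hgood
    simpa only [hiff] using exists_mpProd_ne_bot hω n a
  have hEJ : ∀ M ∈ patternSet μ A, ∀ a ∈ J, ∀ b, M a b ≠ ⊥ → b ∈ J := by
    intro M hM a ha b hab
    obtain ⟨n, ω, ⟨-, hω⟩, hiff⟩ := exists_of_mem_patternSet hM hgood
    exact mem_of_mpProd_ne_bot hω ha ((hiff a b).1 hab)
  obtain ⟨p, q, hpq⟩ : ∃ (p : I) (q : J), 0 < μ {ω | A 0 ω p q ≠ ⊥} := by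
    by_contra! hcon
    refine hD.ne ((measure_congr (Filter.eventuallyEq_univ.2 ?_)).trans measure_univ)
    have hae : ∀ᵐ ω ∂μ, ∀ (p : I) (q : J), A 0 ω p q = ⊥ :=
      ae_all_iff.2 fun p => ae_all_iff.2 fun q => ae_iff.2 (nonpos_iff_eq_zero.1 (hcon p q))
    filter_upwards [hae] with ω hω
    funext p q
    exact hω p q
  obtain ⟨M₀, hM₀, hpq₀⟩ := exists_mem_patternSet_ne_bot hpq
  have hreach : ∀ a, ∃ M ∈ patternSet μ A, ∃ b ∈ J, M a b ≠ ⊥ := by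
    intro a
    have haIJ : a ∈ I ∪ J := hcover ▸ Set.mem_univ a
    rcases haIJ with haI | haJ
    · refine Relation.ReflTransGen.head_induction_on
        (motive := fun (c : I) _ => ∃ M ∈ patternSet μ A, ∃ b ∈ J, M c b ≠ ⊥)
        (hconn ⟨a, haI⟩ p) ⟨M₀, hM₀, q, q.2, hpq₀⟩ ?_
      rintro c e hce - ⟨M, hM, b, hb, heb⟩
      obtain ⟨N, hN, hNce⟩ := exists_mem_patternSet_ne_bot (i := (c : Fin d)) (j := e) hce
      exact ⟨mpMul N M, hsemi N hN M hM, b, hb, mpMul_ne_bot_iff.2 ⟨e, hNce, heb⟩⟩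
    · obtain ⟨b, hb⟩ := hErow M₀ hM₀ a
      exact ⟨M₀, hM₀, b, hEJ M₀ hM₀ a haJ b hb, hb⟩
  obtain ⟨M, ⟨N, -, hN⟩, hMJ⟩ :=
    exists_forall_exists_mem_ne_bot ⟨M₀, hM₀⟩ hsemi hErow hEJ hreach
  have hmeas : Measurable fun ω n => A n ω := measurable_pi_lambda _ hA
  have hU : MeasurableSet {x : ℕ → Fin d → Fin d → EReal |
      ∀ a, ∃ b ∈ J, mpProd x N a b ≠ ⊥} := by
    have hset : ∀ a b, MeasurableSet {x : ℕ → Fin d → Fin d → EReal | mpProd x N a b ≠ ⊥} :=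
      fun a b => measurable_mpProd N a b (measurableSet_singleton ⊥).compl
    simp only [Set.ofPred_forall, Set.ofPred_exists, Set.ofPred_and]
    exact .iInter fun a => .iUnion fun b => (MeasurableSet.const _).inter (hset a b)
  have hpos : μ.map (fun ω n => A n ω) {x | ∀ a, ∃ b ∈ J, mpProd x N a b ≠ ⊥} ≠ 0 := by
    rw [Measure.map_apply hmeas hU]
    refine (hN.trans_le (measure_mono ?_)).ne'
    intro ω hω a
    obtain ⟨b, hb, hab⟩ := hMJ a
    rw [← show _ = M from hω] at hab
    exact ⟨b, hb, mpProd_mpPattern_ne_bot_iff.1 hab⟩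
  have := Measure.isFiniteMeasure_map μ fun ω n => A n ω
  have hvisit := ae_of_ae_map hmeas.aemeasurable (Ergodic.ae_exists_iterate_mem herg hU hpos)
  refine measure_eq_zero_iff_ae_notMem.2 ?_
  filter_upwards [hgood, hvisit] with ω hω hvis hbot
  obtain ⟨n, hn⟩ := hvis
  obtain ⟨j, hj⟩ := exists_mpProd_ne_bot (f := fun k => A k ω) hω.1 n i
  obtain ⟨k, hkJ, hjk⟩ := hn j
  rw [show (fun (x : ℕ → Fin d → Fin d → EReal) (n : ℕ) => x (n + 1))^[n] (fun k => A k ω) =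
    fun k => A (k + n) ω from funext (iterate_shift_apply _ n)] at hjk
  obtain ⟨hkI, -⟩ := mem_of_forall_mpVec_eq_bot hcover hbot
    (mpProd_add_ne_bot (f := fun k => A k ω) hj hjk)
  exact Set.disjoint_left.1 hdisj hkI hkJ
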